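/- Let X and Y be independent real-valued random variables with X ~ N(μX, σX²) and Y ~ N(μY, σY²), where σX, σY > 0. Set α = √(σX² + σY²) and β = (μX − μY)/α. Then E[max(X, Y)] = μX·Φ(β) + μY·Φ(−β) + α·φ(β), where φ(x) = exp(−x²/2)/√(2π) is the standard normal density and Φ is its cumulative distribution function. -/

import Mathlib

open MeasureTheory ProbabilityTheory

/-- The standard normal density `φ(x) = exp(−x²/2)/√(2π)`. -/
noncomputable def stdNormalPDF (x : ℝ) : ℝ :=
  Real.exp (-x ^ 2 / 2) / Real.sqrt (2 * Real.pi)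

/-- The standard normal cumulative distribution function `Φ(x) = ∫_{−∞}^{x} φ(t) dt`. -/
noncomputable def stdNormalCDF (x : ℝ) : ℝ :=
  ∫ t in Set.Iic x, stdNormalPDF t

/-!
From `max x y = y + max (x - y) 0`, the mean of `max X Y` is `E[Y] + E[max (X - Y) 0]`, so only the
law of `X - Y` matters. Standardising it to `Z ∼ N(0, 1)` gives
`E[max (X - Y) 0] = α E[(Z + β) 1_{Z > -β}]`, and since `z φ(z)` has primitive `-φ(z)` this is
`α (φ(β) + β Φ(β))`.
-/

open Filter Set
open scoped NNReal Topology

lemma stdNormalPDF_eq_gaussianPDFReal : stdNormalPDF = gaussianPDFReal 0 1 := by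
  ext x
  simp [stdNormalPDF, gaussianPDFReal, div_eq_inv_mul]

lemma stdNormalPDF_neg (x : ℝ) : stdNormalPDF (-x) = stdNormalPDF x := by
  simp [stdNormalPDF]

lemma integrable_stdNormalPDF : Integrable stdNormalPDF :=
  stdNormalPDF_eq_gaussianPDFReal ▸ integrable_gaussianPDFReal 0 1

lemma integral_stdNormalPDF : ∫ x, stdNormalPDF x = 1 :=
  stdNormalPDF_eq_gaussianPDFReal ▸ integral_gaussianPDFReal_eq_one 0 one_ne_zero

lemma integrable_mul_stdNormalPDF : Integrable fun x ↦ x * stdNormalPDF x := by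
  have h := (integrable_mul_exp_neg_mul_sq (b := 1 / 2) (by norm_num)).div_const √(2 * Real.pi)
  convert h using 2 with x
  rw [stdNormalPDF, mul_div_assoc, neg_div, neg_mul, one_div_mul_eq_div]

lemma hasDerivAt_stdNormalPDF (x : ℝ) : HasDerivAt stdNormalPDF (-(x * stdNormalPDF x)) x := by
  have hexponent : HasDerivAt (fun x : ℝ ↦ -x ^ 2 / 2) (-x) x := by
    refine ((hasDerivAt_pow 2 x).neg.div_const 2).congr_deriv ?_
    ring
  refine (hexponent.exp.div_const √(2 * Real.pi)).congr_deriv ?_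
  rw [stdNormalPDF]
  ring

lemma setIntegral_Ioi_mul_stdNormalPDF (a : ℝ) :
    ∫ x in Ioi a, x * stdNormalPDF x = stdNormalPDF a := by
  have hderiv (x : ℝ) := hasDerivAt_stdNormalPDF x
  have hint := integrable_mul_stdNormalPDF.neg.integrableOn (s := Ioi a)
  have hlim : Tendsto stdNormalPDF atTop (𝓝 0) :=
    tendsto_zero_of_hasDerivAt_of_integrableOn_Ioi (fun x _ ↦ hderiv x) hint
      integrable_stdNormalPDF.integrableOn
  have hftc := integral_Ioi_of_hasDerivAt_of_tendsto' (fun x _ ↦ hderiv x) hint hlim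
  rw [integral_neg] at hftc
  linarith

lemma setIntegral_Ioi_stdNormalPDF (a : ℝ) :
    ∫ x in Ioi a, stdNormalPDF x = stdNormalCDF (-a) := by
  simpa only [stdNormalCDF, stdNormalPDF_neg, neg_neg] using
    (integral_comp_neg_Iic (-a) stdNormalPDF).symm

lemma stdNormalCDF_neg (x : ℝ) : stdNormalCDF (-x) = 1 - stdNormalCDF x := by
  rw [← setIntegral_Ioi_stdNormalPDF, ← integral_stdNormalPDF, stdNormalCDF, eq_sub_iff_add_eq',
    ← compl_Iic, integral_add_compl measurableSet_Iic integrable_stdNormalPDF]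

lemma integral_max_add_zero_gaussianReal_zero_one (b : ℝ) :
    ∫ z, max (z + b) 0 ∂gaussianReal 0 1 = b * stdNormalCDF b + stdNormalPDF b := by
  have hindicator : (fun z ↦ stdNormalPDF z • max (z + b) 0) =
      (Ioi (-b)).indicator fun z ↦ z * stdNormalPDF z + b * stdNormalPDF z := by
    ext z
    rcases lt_or_ge (-b) z with hz | hz
    · rw [indicator_of_mem (mem_Ioi.2 hz), max_eq_left (by linarith), smul_eq_mul]
      ring
    · rw [indicator_of_notMem (notMem_Ioi.2 hz), max_eq_right (by linarith), smul_zero]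
  calc ∫ z, max (z + b) 0 ∂gaussianReal 0 1
      = ∫ z in Ioi (-b), (z * stdNormalPDF z + b * stdNormalPDF z) := by
        rw [integral_gaussianReal_eq_integral_smul one_ne_zero, ← stdNormalPDF_eq_gaussianPDFReal,
          hindicator, integral_indicator measurableSet_Ioi]
    _ = stdNormalPDF (-b) + b * stdNormalCDF (- -b) := by
        rw [integral_add integrable_mul_stdNormalPDF.integrableOn
            (integrable_stdNormalPDF.const_mul b).integrableOn, integral_const_mul,
          setIntegral_Ioi_mul_stdNormalPDF, setIntegral_Ioi_stdNormalPDF]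
    _ = b * stdNormalCDF b + stdNormalPDF b := by
        rw [stdNormalPDF_neg, neg_neg, add_comm]

lemma gaussianReal_eq_map_gaussianReal_zero_one (m : ℝ) (v : ℝ≥0) :
    gaussianReal m v = (gaussianReal 0 1).map fun z ↦ √v * z + m := by
  have hlaw : HasLaw (fun z ↦ √v * z + m) _ (gaussianReal 0 1) :=
    gaussianReal_add_const (gaussianReal_const_mul HasLaw.id √v) m
  rw [hlaw.map_eq, mul_zero, zero_add, mul_one]
  congr 1
  ext
  simp

lemma integral_max_zero_gaussianReal (m : ℝ) {v : ℝ≥0} (hv : v ≠ 0) :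
    ∫ x, max x 0 ∂gaussianReal m v =
      m * stdNormalCDF (m / √v) + √v * stdNormalPDF (m / √v) := by
  have hsqrt : 0 < √(v : ℝ) := by positivity
  have hscale (z : ℝ) : max (√v * z + m) 0 = √v * max (z + m / √v) 0 := by
    rw [mul_max_of_nonneg _ _ hsqrt.le, mul_add, mul_div_cancel₀ _ hsqrt.ne', mul_zero]
  rw [gaussianReal_eq_map_gaussianReal_zero_one, integral_map (by fun_prop) (by fun_prop)]
  simp_rw [hscale]
  rw [integral_const_mul, integral_max_add_zero_gaussianReal_zero_one]
  field_simp

section RandomVariables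

variable {Ω : Type*} {mΩ : MeasurableSpace Ω} {P : Measure Ω} {X Y : Ω → ℝ}

lemma variance_sub_of_indepFun [IsFiniteMeasure P] (hX : MemLp X 2 P) (hY : MemLp Y 2 P)
    (hindep : IndepFun X Y P) : Var[X - Y; P] = Var[X; P] + Var[Y; P] := by
  rw [variance_sub hX hY, hindep.covariance_eq_zero hX hY, mul_zero, sub_zero]

lemma integral_max_eq_integral_add_integral_max_sub_zero (hY : Integrable Y P)
    (hXY : Integrable (X - Y) P) :
    ∫ ω, max (X ω) (Y ω) ∂P = ∫ ω, Y ω ∂P + ∫ ω, max ((X - Y) ω) 0 ∂P := by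
  rw [← integral_add hY hXY.pos_part]
  congr with ω
  rw [← max_add_add_left, Pi.sub_apply, add_sub_cancel, add_zero]

lemma integral_max_zero_of_hasGaussianLaw (hX : HasGaussianLaw X P) (hvar : Var[X; P] ≠ 0) :
    ∫ ω, max (X ω) 0 ∂P =
      P[X] * stdNormalCDF (P[X] / √Var[X; P]) + √Var[X; P] * stdNormalPDF (P[X] / √Var[X; P]) := by
  have hvar_pos : 0 < Var[X; P] := (variance_nonneg X P).lt_of_ne' hvar
  have h := integral_max_zero_gaussianReal P[X] (Real.toNNReal_pos.2 hvar_pos).ne'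
  rwa [← hX.map_eq_gaussianReal, integral_map hX.aemeasurable (by fun_prop),
    Real.coe_toNNReal _ hvar_pos.le] at h

theorem mean_max_of_gaussian_general {μX μY α β : ℝ} (hY : Integrable Y P)
    (hXY : HasGaussianLaw (X - Y) P) (hvar : Var[X - Y; P] ≠ 0)
    (hμX : P[X] = μX) (hμY : P[Y] = μY) (hα : α = √Var[X - Y; P]) (hβ : β = (μX - μY) / α) :
    ∫ ω, max (X ω) (Y ω) ∂P =
      μX * stdNormalCDF β + μY * stdNormalCDF (-β) + α * stdNormalPDF β := by
  have hX : Integrable X P := by simpa using hXY.integrable.add hY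
  have hmean : P[X - Y] = μX - μY := by rw [integral_sub' hX hY, hμX, hμY]
  rw [integral_max_eq_integral_add_integral_max_sub_zero hY hXY.integrable,
    integral_max_zero_of_hasGaussianLaw hXY hvar, hmean, hμY, ← hα, ← hβ, stdNormalCDF_neg]
  ring

end RandomVariables

/-- Clark's formula for the mean of the maximum of two independent Gaussian random
variables: `E[max(X,Y)] = μX Φ(β) + μY Φ(−β) + α φ(β)` where `α = √(σX² + σY²)` and
`β = (μX − μY)/α`. -/
theorem mean_max_of_gaussian
    {Ω : Type*} [MeasurableSpace Ω] (P : Measure Ω) [IsProbabilityMeasure P]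
    (X Y : Ω → ℝ) (hX : Measurable X) (hY : Measurable Y)
    (μX μY σX σY : ℝ) (hσX : 0 < σX) (hσY : 0 < σY)
    (hXd : Measure.map X P = gaussianReal μX (σX ^ 2).toNNReal)
    (hYd : Measure.map Y P = gaussianReal μY (σY ^ 2).toNNReal)
    (hindep : IndepFun X Y P)
    (α β : ℝ) (hα : α = Real.sqrt (σX ^ 2 + σY ^ 2)) (hβ : β = (μX - μY) / α) :
    ∫ ω, max (X ω) (Y ω) ∂P =
      μX * stdNormalCDF β + μY * stdNormalCDF (-β) + α * stdNormalPDF β := by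
  have lawX : HasLaw X (gaussianReal μX (σX ^ 2).toNNReal) P := ⟨hX.aemeasurable, hXd⟩
  have lawY : HasLaw Y (gaussianReal μY (σY ^ 2).toNNReal) P := ⟨hY.aemeasurable, hYd⟩
  have hvar : Var[X - Y; P] = σX ^ 2 + σY ^ 2 := by
    rw [variance_sub_of_indepFun lawX.hasGaussianLaw.memLp_two lawY.hasGaussianLaw.memLp_two hindep,
      lawX.variance_eq, lawY.variance_eq, variance_id_gaussianReal, variance_id_gaussianReal,
      Real.coe_toNNReal _ (sq_nonneg _), Real.coe_toNNReal _ (sq_nonneg _)]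
  exact mean_max_of_gaussian_general lawY.hasGaussianLaw.integrable
    (hindep.hasGaussianLaw lawX.hasGaussianLaw lawY.hasGaussianLaw).sub (hvar ▸ by positivity)
    (lawX.integral_eq.trans integral_id_gaussianReal)
    (lawY.integral_eq.trans integral_id_gaussianReal) (hvar ▸ hα) hβ
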